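/- arXiv:2107.11199 — 4 statements merged into one kernel-verified Lean document; each statement's English description precedes it below -/
import Mathlib

section
/- Let (X,d) be a metric space, T : X → X a type 1 φ_{x₀}-contraction with point x₀ ∈ X and given function φ : X → [0,∞). If φ(x₀) = 0 and φ(x) ≤ d(Tx,x) for all x ∈ C_{x₀,ρ}, then the circle C_{x₀,ρ} is a φ-fixed circle of T, i.e. C_{x₀,ρ} ⊆ Fix(T) ∩ Z_φ. -/
/-!
A point `x` moved by `T` is moved by at least `ρ`. If moreover `d(x, x₀) ≤ ρ`, `φ(x₀) ≤ ρ` and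
`φ(x) ≤ d(Tx, x)`, then all three terms of `max {d(x, x₀), φ(x), φ(x₀)}` are at most `d(Tx, x)`,
whereas the contraction condition forces `d(Tx, x)` to be strictly below that maximum. Hence `x`
is fixed, and then `φ(x) ≤ d(Tx, x) = 0`.
-/

open Function Metric

section

variable {X : Type*} {T : X → X} {φ : X → ℝ} {x₀ x : X}

/-- The number `ρ` of the theorem: the infimum of the displacements `d(Ty, y)` of the points moved
by `T`. It is `0` when `T` is the identity, as the infimum of the empty set of reals. -/
noncomputable def displacementGap [Dist X] (T : X → X) : ℝ :=
  sInf {r : ℝ | ∃ y, T y ≠ y ∧ r = dist (T y) y}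

/-- The type 1 `φ_{x₀}`-contractions, with the ternary maxima written as nested binary ones. -/
def IsTypeOneContraction [Dist X] (φ : X → ℝ) (x₀ : X) (T : X → X) : Prop :=
  ∃ k ∈ Set.Ioo (0 : ℝ) 1, ∀ x : X, 0 < dist (T x) x →
    max (max (dist x (T x)) (φ (T x))) (φ x) ≤ k * max (max (dist x x₀) (φ x)) (φ x₀)

theorem displacementGap_nonneg [PseudoMetricSpace X] (T : X → X) : 0 ≤ displacementGap T := by
  refine Real.sInf_nonneg ?_
  rintro _ ⟨y, -, rfl⟩
  exact dist_nonneg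

theorem displacementGap_le_dist [PseudoMetricSpace X] (hx : T x ≠ x) :
    displacementGap T ≤ dist (T x) x := by
  refine csInf_le ⟨0, ?_⟩ ⟨x, hx, rfl⟩
  rintro _ ⟨y, -, rfl⟩
  exact dist_nonneg

theorem IsTypeOneContraction.dist_lt_max [PseudoMetricSpace X]
    (hT : IsTypeOneContraction φ x₀ T) (hmoved : 0 < dist (T x) x) :
    dist (T x) x < max (max (dist x x₀) (φ x)) (φ x₀) := by
  obtain ⟨k, ⟨hk_pos, hk_lt_one⟩, hk⟩ := hT
  have hle : dist (T x) x ≤ k * max (max (dist x x₀) (φ x)) (φ x₀) := by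
    rw [dist_comm]
    exact (le_max_left _ _).trans ((le_max_left _ _).trans (hk x hmoved))
  have hmax_pos : 0 < max (max (dist x x₀) (φ x)) (φ x₀) :=
    pos_of_mul_pos_right (hmoved.trans_le hle) hk_pos.le
  exact hle.trans_lt (mul_lt_of_lt_one_left hmax_pos hk_lt_one)

theorem isFixedPt_of_dist_lt_max [PseudoMetricSpace X]
    (hT : T x ≠ x → dist (T x) x < max (max (dist x x₀) (φ x)) (φ x₀))
    (hx : dist x x₀ ≤ displacementGap T) (hφx : φ x ≤ dist (T x) x)
    (hφx₀ : φ x₀ ≤ displacementGap T) : IsFixedPt T x := by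
  by_contra hmoved
  have hgap : displacementGap T ≤ dist (T x) x := displacementGap_le_dist hmoved
  exact (hT hmoved).not_ge (max_le (max_le (hx.trans hgap) hφx) (hφx₀.trans hgap))

theorem stmt_0_general [PseudoMetricSpace X] (hφ : ∀ x, 0 ≤ φ x)
    (hT : ∀ x, T x ≠ x → dist (T x) x < max (max (dist x x₀) (φ x)) (φ x₀))
    (hφx₀ : φ x₀ ≤ displacementGap T) {r : ℝ} (hr : r ≤ displacementGap T)
    (hineq : ∀ x ∈ sphere x₀ r, φ x ≤ dist (T x) x) :
    sphere x₀ r ⊆ fixedPoints T ∩ φ ⁻¹' {0} := by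
  intro x hx
  have hfix : IsFixedPt T x :=
    isFixedPt_of_dist_lt_max (hT x) ((mem_sphere.mp hx).trans_le hr) (hineq x hx) hφx₀
  have hφx : φ x ≤ 0 := by simpa only [hfix.eq, dist_self] using hineq x hx
  exact ⟨hfix, hφx.antisymm (hφ x)⟩

end

/-- Auto-formalization of a φ-fixed circle theorem. -/
theorem stmt_0 {X : Type*} [MetricSpace X] (T : X → X) (φ : X → ℝ)
    (hφ : ∀ x, 0 ≤ φ x) (x₀ : X)
    (hT : ∃ k ∈ Set.Ioo (0:ℝ) 1, ∀ x : X, 0 < dist (T x) x →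
      max (max (dist x (T x)) (φ (T x))) (φ x) ≤
        k * max (max (dist x x₀) (φ x)) (φ x₀))
    (hx₀ : φ x₀ = 0)
    (ρ : ℝ) (hρ : ρ = sInf {r : ℝ | ∃ y, T y ≠ y ∧ r = dist (T y) y})
    (hineq : ∀ x : X, dist x x₀ = ρ → φ x ≤ dist (T x) x) :
    ∀ x : X, dist x x₀ = ρ → T x = x ∧ φ x = 0 := by
  have hcontr : IsTypeOneContraction φ x₀ T := hT
  exact fun _ hx => stmt_0_general hφ (fun _ hne => hcontr.dist_lt_max (dist_pos.mpr hne))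
    (hx₀.trans_le (displacementGap_nonneg T)) hρ.le hineq hx
end

section
/- Let (X,d) be a metric space, T : X → X a type 2 φ_{x₀}-contraction with point x₀ ∈ X and given function φ : X → [0,∞). If φ(x₀) = 0 and φ(x) ≤ d(Tx,x) for all x ∈ C_{x₀,ρ}, then the circle C_{x₀,ρ} is a φ-fixed circle of T, i.e. C_{x₀,ρ} ⊆ Fix(T) ∩ Z_φ. -/
section PseudoMetricSpace

variable {X : Type*} [PseudoMetricSpace X] {T : X → X} {φ : X → ℝ} {x₀ x : X}

/-- `T` is a type 2 `φ_{x₀}`-contraction with point `x₀`. The paper's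
`φ : X → [0,∞)` is encoded as a real-valued function. -/
def IsTypeTwoPhiContraction (T : X → X) (φ : X → ℝ) (x₀ : X) : Prop :=
  ∃ k ∈ Set.Ioo (0 : ℝ) 1, ∀ x : X, 0 < dist (T x) x →
    max (dist x (T x)) (φ (T x)) + φ x ≤ k * max (dist x x₀) (φ x) + φ x₀

/-- The number `ρ`: the infimum of the distances by which `T` moves its non-fixed points, equal to
`0` when every point is fixed (`sInf ∅ = 0` in `ℝ`). -/
noncomputable def infDisplacement (T : X → X) : ℝ :=
  sInf {r : ℝ | ∃ y, T y ≠ y ∧ r = dist (T y) y}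

theorem infDisplacement_le_dist (hx : T x ≠ x) : infDisplacement T ≤ dist (T x) x := by
  refine csInf_le ⟨0, ?_⟩ ⟨x, hx, rfl⟩
  rintro _ ⟨y, -, rfl⟩
  exact dist_nonneg

theorem IsTypeTwoPhiContraction.dist_map_lt_max (hT : IsTypeTwoPhiContraction T φ x₀)
    (hφx : φ x₀ ≤ φ x) (hx : 0 < dist (T x) x) : dist (T x) x < max (dist x x₀) (φ x) := by
  obtain ⟨k, ⟨hk_pos, hk_lt_one⟩, hcontr⟩ := hT
  have hle : dist (T x) x ≤ k * max (dist x x₀) (φ x) := by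
    have hmax := le_max_left (dist x (T x)) (φ (T x))
    rw [dist_comm (T x) x]
    linarith [hcontr x hx]
  have hmax_pos : 0 < max (dist x x₀) (φ x) := pos_of_mul_pos_right (hx.trans_le hle) hk_pos.le
  exact hle.trans_lt (mul_lt_of_lt_one_left hmax_pos hk_lt_one)

theorem stmt_4_general (hT : IsTypeTwoPhiContraction T φ x₀) (hφ : ∀ y, 0 ≤ φ y)
    (hx₀ : φ x₀ = 0) (hx : dist x x₀ ≤ infDisplacement T) (hφx : φ x ≤ dist (T x) x) :
    dist (T x) x = 0 ∧ φ x = 0 := by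
  have hdist : dist (T x) x = 0 := by
    by_contra hne
    have hpos : 0 < dist (T x) x := dist_nonneg.lt_of_ne' hne
    have hmoved : T x ≠ x := fun h => hne (by rw [h, dist_self])
    have hmax_le : max (dist x x₀) (φ x) ≤ dist (T x) x :=
      max_le (hx.trans (infDisplacement_le_dist hmoved)) hφx
    exact (hT.dist_map_lt_max (hx₀.trans_le (hφ x)) hpos).not_ge hmax_le
  exact ⟨hdist, (hφx.trans_eq hdist).antisymm (hφ x)⟩

end PseudoMetricSpace

/-- Auto-formalization of a φ-fixed circle theorem. -/
theorem stmt_4 {X : Type*} [MetricSpace X] (T : X → X) (φ : X → ℝ)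
    (hφ : ∀ x, 0 ≤ φ x) (x₀ : X)
    (hT : ∃ k ∈ Set.Ioo (0:ℝ) 1, ∀ x : X, 0 < dist (T x) x →
      max (dist x (T x)) (φ (T x)) + φ x ≤
        k * max (dist x x₀) (φ x) + φ x₀)
    (hx₀ : φ x₀ = 0)
    (ρ : ℝ) (hρ : ρ = sInf {r : ℝ | ∃ y, T y ≠ y ∧ r = dist (T y) y})
    (hineq : ∀ x : X, dist x x₀ = ρ → φ x ≤ dist (T x) x) :
    ∀ x : X, dist x x₀ = ρ → T x = x ∧ φ x = 0 := by
  intro x hx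
  obtain ⟨hdist, hzero⟩ := stmt_4_general hT hφ hx₀ (hx.trans hρ).le (hineq x hx)
  exact ⟨eq_of_dist_eq_zero hdist, hzero⟩
end

section
/- Let (X,d) be a metric space, T : X → X a type 2 φ_{x₀}-contraction with point x₀ ∈ X and given function φ : X → [0,∞). If φ(x₀) = 0 and φ(x) ≤ d(Tx,x) for all x ∈ D_{x₀,ρ}, then the disc D_{x₀,ρ} is a φ-fixed disc of T, i.e. D_{x₀,ρ} ⊆ Fix(T) ∩ Z_φ. -/
/-! A point `x` displaced by a type 2 `φ_{x₀}`-contraction with `φ x₀ = 0` satisfies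
`d(Tx, x) + φ x < max {d(x, x₀), φ x}`. The maximum cannot be `φ x`, so `x` is moved by less than
its distance to `x₀`. In the disc of radius `ρ` that distance is at most `ρ`, whereas every
displaced point is moved by at least `ρ`; hence the disc contains only fixed points. At a fixed
point, `φ x ≤ d(Tx, x)` forces `φ x = 0`. -/

open Function Metric

theorem lt_of_le_mul_of_lt_one {R : Type*} [Semiring R] [PartialOrder R] [IsStrictOrderedRing R]
    {a b k : R} (ha : 0 < a) (hb : 0 ≤ b) (hk : k < 1) (h : a ≤ k * b) : a < b := by
  have b_pos : 0 < b := ha.trans_le (h.trans (mul_le_of_le_one_left hb hk.le))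
  exact h.trans_lt (mul_lt_of_lt_one_left b_pos hk)

theorem lt_of_add_lt_max {M : Type*} [AddCommMonoid M] [LinearOrder M] [IsOrderedAddMonoid M]
    {a b c : M} (ha : 0 ≤ a) (hb : 0 ≤ b) (h : a + b < max c b) : a < c := by
  rcases lt_max_iff.mp h with h_lt_c | h_lt_b
  · exact (le_add_of_nonneg_right hb).trans_lt h_lt_c
  · exact absurd h_lt_b (le_add_of_nonneg_left ha).not_gt

theorem sInf_displacement_le {X : Type*} [PseudoMetricSpace X] {T : X → X} {x : X}
    (hx : T x ≠ x) : sInf {r : ℝ | ∃ y, T y ≠ y ∧ r = dist (T y) y} ≤ dist (T x) x := by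
  refine csInf_le ⟨0, ?_⟩ ⟨x, hx, rfl⟩
  rintro _ ⟨y, -, rfl⟩
  exact dist_nonneg

theorem closedBall_subset_fixedPoints {X : Type*} [PseudoMetricSpace X] {T : X → X} {x₀ : X}
    {r : ℝ} (hT : ∀ x, T x ≠ x → dist (T x) x < dist x x₀)
    (hr : ∀ x, T x ≠ x → r ≤ dist (T x) x) : closedBall x₀ r ⊆ fixedPoints T := by
  intro x hx
  by_contra hne
  exact ((hT x hne).trans_le (mem_closedBall.mp hx)).not_ge (hr x hne)

/-- `T` is a type 2 `φ_{x₀}`-contraction with point `x₀`. The auxiliary function `φ` is real-valued;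
its nonnegativity is a separate hypothesis wherever it is needed. -/
def IsTypeTwoContraction {X : Type*} [PseudoMetricSpace X] (T : X → X) (φ : X → ℝ) (x₀ : X) :
    Prop :=
  ∃ k ∈ Set.Ioo (0 : ℝ) 1, ∀ x : X, 0 < dist (T x) x →
    max (dist x (T x)) (φ (T x)) + φ x ≤ k * max (dist x x₀) (φ x) + φ x₀

theorem IsTypeTwoContraction.dist_add_lt_max {X : Type*} [MetricSpace X] {T : X → X} {φ : X → ℝ}
    {x₀ x : X} (hT : IsTypeTwoContraction T φ x₀) (hx₀ : φ x₀ = 0) (hφx : 0 ≤ φ x) (hx : T x ≠ x) :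
    dist (T x) x + φ x < max (dist x x₀) (φ x) := by
  obtain ⟨k, ⟨-, hk⟩, hcontr⟩ := hT
  have displacement_pos : 0 < dist (T x) x := dist_pos.mpr hx
  refine lt_of_le_mul_of_lt_one (add_pos_of_pos_of_nonneg displacement_pos hφx)
    (le_max_of_le_left dist_nonneg) hk ?_
  calc dist (T x) x + φ x
      ≤ max (dist x (T x)) (φ (T x)) + φ x := by
        gcongr
        exact (dist_comm _ _).trans_le (le_max_left _ _)
    _ ≤ k * max (dist x x₀) (φ x) + φ x₀ := hcontr x displacement_pos
    _ = k * max (dist x x₀) (φ x) := by rw [hx₀, add_zero]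

theorem stmt_5_general {X : Type*} [PseudoMetricSpace X] {T : X → X} {φ : X → ℝ} {x₀ : X} {r : ℝ}
    (hφ : ∀ x, 0 ≤ φ x)
    (hT : ∀ x, T x ≠ x → dist (T x) x + φ x < max (dist x x₀) (φ x))
    (hr : ∀ x, T x ≠ x → r ≤ dist (T x) x) :
    ∀ x, dist x x₀ ≤ r → T x = x ∧ (φ x ≤ dist (T x) x → φ x = 0) := by
  intro x hx
  have hfix : T x = x := closedBall_subset_fixedPoints
    (fun y hy => lt_of_add_lt_max dist_nonneg (hφ y) (hT y hy)) hr hx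
  refine ⟨hfix, fun hle => le_antisymm ?_ (hφ x)⟩
  rwa [hfix, dist_self] at hle

/-- Auto-formalization of a φ-fixed disc theorem. -/
theorem stmt_5 {X : Type*} [MetricSpace X] (T : X → X) (φ : X → ℝ)
    (hφ : ∀ x, 0 ≤ φ x) (x₀ : X)
    (hT : ∃ k ∈ Set.Ioo (0:ℝ) 1, ∀ x : X, 0 < dist (T x) x →
      max (dist x (T x)) (φ (T x)) + φ x ≤
        k * max (dist x x₀) (φ x) + φ x₀)
    (hx₀ : φ x₀ = 0)
    (ρ : ℝ) (hρ : ρ = sInf {r : ℝ | ∃ y, T y ≠ y ∧ r = dist (T y) y})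
    (hineq : ∀ x : X, dist x x₀ ≤ ρ → φ x ≤ dist (T x) x) :
    ∀ x : X, dist x x₀ ≤ ρ → T x = x ∧ φ x = 0 := fun x hx =>
  (stmt_5_general hφ (fun y => IsTypeTwoContraction.dist_add_lt_max hT hx₀ (hφ y))
    (fun _ hy => hρ.trans_le (sInf_displacement_le hy)) x hx).imp_right (· (hineq x hx))
end

section
/- Let (X,d) be a metric space, T : X → X a generalized type 3 φ_{x₀}-contraction with point x₀ ∈ X and given function φ : X → [0,∞). If φ(x₀) = 0, then x₀ is a φ-fixed point of T, i.e. Tx₀ = x₀ and φ(x₀) = 0. -/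
section PhiContraction

variable {X : Type*} [PseudoMetricSpace X]

/-- The quantity `M(x, y)` on the right-hand side of the generalized type 3 contraction condition.
The denominator is at least `1`, so the division is genuine. -/
noncomputable def typeThreeMax (T : X → X) (x y : X) : ℝ :=
  max (max (dist x y) (dist x (T x)))
    (max (dist y (T y))
      ((dist x (T y) + dist y (T x)) / (1 + dist x (T x) + dist y (T y)) * dist x y))

theorem typeThreeMax_self (T : X → X) (x : X) : typeThreeMax T x x = dist x (T x) := by
  have hnonneg : 0 ≤ dist x (T x) := dist_nonneg
  rw [typeThreeMax, dist_self, mul_zero, max_eq_right hnonneg, max_eq_left hnonneg, max_self]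

theorem stmt_17_general {T : X → X} {φ : X → ℝ} (hφ : ∀ x, 0 ≤ φ x) {x₀ : X} {k : ℝ} (hk : k < 1)
    (hkφ : k ≤ 1 / 2 ∨ φ x₀ = 0)
    (hT : 0 < dist (T x₀) x₀ →
      dist x₀ (T x₀) + φ (T x₀) + φ x₀ ≤ k * (typeThreeMax T x₀ x₀ + φ x₀ + φ x₀)) :
    dist (T x₀) x₀ = 0 := by
  by_contra hne
  have hpos : 0 < dist (T x₀) x₀ := dist_nonneg.lt_of_ne' hne
  have hcontr : (1 - k) * dist (T x₀) x₀ + φ (T x₀) ≤ (2 * k - 1) * φ x₀ := by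
    have h := hT hpos
    rw [typeThreeMax_self, dist_comm x₀] at h
    linarith
  have hrhs : (2 * k - 1) * φ x₀ ≤ 0 := by
    rcases hkφ with hk_half | hφ_zero
    · exact mul_nonpos_of_nonpos_of_nonneg (by linarith) (hφ x₀)
    · rw [hφ_zero, mul_zero]
  have hlhs : 0 < (1 - k) * dist (T x₀) x₀ := mul_pos (sub_pos.mpr hk) hpos
  linarith [hφ (T x₀)]

end PhiContraction

/-- Auto-formalization of a φ-fixed point theorem. -/
theorem stmt_17 {X : Type*} [MetricSpace X] (T : X → X) (φ : X → ℝ)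
    (hφ : ∀ x, 0 ≤ φ x) (x₀ : X)
    (hT : ∃ k ∈ Set.Ioo (0:ℝ) (1/2), ∀ x : X, 0 < dist (T x) x →
      dist x (T x) + φ (T x) + φ x ≤
        k * (max (max (dist x x₀) (dist x (T x))) (max (dist x₀ (T x₀)) ((dist x (T x₀) + dist x₀ (T x)) / (1 + dist x (T x) + dist x₀ (T x₀)) * dist x x₀)) + φ x + φ x₀))
    (hx₀ : φ x₀ = 0) :
    T x₀ = x₀ ∧ φ x₀ = 0 := by
  obtain ⟨k, ⟨-, hk⟩, hcontr⟩ := hT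
  exact ⟨dist_eq_zero.mp (stmt_17_general hφ (by linarith) (.inl hk.le) (hcontr x₀)), hx₀⟩
end
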